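/- Let U be a finite set with |U| = n and w : U → (0,∞) a positive weight function with total weight W = Σ_{a∈U} w(a). Fix a threshold φ > 0, let n_{≥φ} = |{ a ∈ U : w(a) ≥ φ }| and p = n_{≥φ}/n. Let a be a proportional sample and define b = 1/w(a) if w(a) ≥ φ, and b = 0 otherwise. Then E[b] = p·n/W and Var(b) ≤ p·n/(φ·W). -/

import Mathlib

open MeasureTheory ProbabilityTheory

/-!
Write `S = {x | φ ≤ w x}`.  Each `x ∈ S` is drawn with probability `w x / W` and then contributes
`(w x)⁻¹` to `b`, so `E[b ^ (k + 1)] = ∑ x ∈ S, (w x)⁻¹ ^ k / W`.  For `k = 0` this is `|S| / W`,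
and for `k = 1` it is at most `|S| / (φ W)` because `(w x)⁻¹ ≤ φ⁻¹` on `S`; the second moment
bounds the variance.

The law of `a` prescribes only the outer measures of its fibres.  The fibres are nevertheless null
measurable: these outer measures add up to at most `μ univ`, so each fibre satisfies Lebesgue's
criterion `μ s + μ sᶜ ≤ μ univ`.
-/

section NullMeasurable

variable {Ω ι : Type*} {mΩ : MeasurableSpace Ω} {μ : Measure Ω} [IsFiniteMeasure μ]

theorem nullMeasurableSet_of_measure_add_measure_compl_le {s : Set Ω}
    (h : μ s + μ sᶜ ≤ μ Set.univ) : NullMeasurableSet s μ := by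
  set T := toMeasurable μ s
  set V := toMeasurable μ sᶜ
  have hsT : s ⊆ T := subset_toMeasurable μ s
  have hsV : sᶜ ⊆ V := subset_toMeasurable μ sᶜ
  have hunion : T ∪ V = Set.univ :=
    Set.eq_univ_of_subset (Set.union_subset_union hsT hsV) (Set.union_compl_self s)
  have hinter : μ (T ∩ V) = 0 := by
    have hle : μ Set.univ + μ (T ∩ V) ≤ μ Set.univ + 0 :=
      calc μ Set.univ + μ (T ∩ V) = μ T + μ V := by
            rw [← hunion, measure_union_add_inter T (measurableSet_toMeasurable μ sᶜ)]
        _ = μ s + μ sᶜ := by rw [measure_toMeasurable, measure_toMeasurable]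
        _ ≤ μ Set.univ + 0 := by rwa [add_zero]
    exact nonpos_iff_eq_zero.1 ((ENNReal.add_le_add_iff_left (measure_ne_top μ _)).1 hle)
  have hdiff : μ (T \ s) = 0 :=
    measure_mono_null (Set.inter_subset_inter_right T hsV) hinter
  exact (measurableSet_toMeasurable μ s).nullMeasurableSet.congr
    ((ae_le_set.2 hdiff).antisymm hsT.eventuallyLE)

theorem nullMeasurableSet_of_iUnion_eq_univ_of_tsum_le [Countable ι] {s : ι → Set Ω}
    (hs : ⋃ i, s i = Set.univ) (h : ∑' i, μ (s i) ≤ μ Set.univ) (i : ι) :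
    NullMeasurableSet (s i) μ := by
  refine nullMeasurableSet_of_measure_add_measure_compl_le (le_trans ?_ h)
  have hcompl : (s i)ᶜ ⊆ ⋃ j : ({i}ᶜ : Set ι), s j := fun ω hω => by
    obtain ⟨j, hj⟩ := Set.mem_iUnion.1 (hs ▸ Set.mem_univ ω)
    exact Set.mem_iUnion.2 ⟨⟨j, fun hji : j = i => hω (hji ▸ hj)⟩, hj⟩
  calc μ (s i) + μ (s i)ᶜ ≤ μ (s i) + ∑' j : ({i}ᶜ : Set ι), μ (s j) := by
        gcongr
        exact (measure_mono hcompl).trans (measure_iUnion_le _)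
    _ = ∑' j, μ (s j) := by
        rw [← ENNReal.sum_add_tsum_compl {i}, Finset.sum_singleton, Finset.coe_singleton]

end NullMeasurable

section FiniteSupport

theorem comp_eq_sum_indicator_fiber {Ω U E : Type*} [AddCommMonoid E] {f : U → E} {s : Finset U}
    (a : Ω → U) (hf : ∀ x ∉ s, f x = 0) (ω : Ω) :
    f (a ω) = ∑ x ∈ s, (a ⁻¹' {x}).indicator (fun _ => f x) ω := by
  classical
  simpa [Set.indicator_apply] using hf (a ω)

variable {Ω U E : Type*} {mΩ : MeasurableSpace Ω} {μ : Measure Ω} [IsFiniteMeasure μ]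
  [NormedAddCommGroup E] {a : Ω → U} {f : U → E} {s : Finset U}

theorem integrable_comp_of_nullMeasurableSet_fiber
    (ha : ∀ x ∈ s, NullMeasurableSet (a ⁻¹' {x}) μ) (hf : ∀ x ∉ s, f x = 0) :
    Integrable (fun ω => f (a ω)) μ := by
  simp_rw [comp_eq_sum_indicator_fiber a hf]
  exact integrable_finsetSum _ fun x hx => (integrable_const _).indicator₀ (ha x hx)

theorem integral_comp_eq_sum_measureReal_fiber_smul [NormedSpace ℝ E] [CompleteSpace E]
    (ha : ∀ x ∈ s, NullMeasurableSet (a ⁻¹' {x}) μ) (hf : ∀ x ∉ s, f x = 0) :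
    ∫ ω, f (a ω) ∂μ = ∑ x ∈ s, μ.real (a ⁻¹' {x}) • f x := by
  simp_rw [comp_eq_sum_indicator_fiber a hf]
  rw [integral_finsetSum _ fun x hx => (integrable_const _).indicator₀ (ha x hx)]
  refine Finset.sum_congr rfl fun x hx => ?_
  rw [integral_indicator₀ (ha x hx), setIntegral_const]

end FiniteSupport

/-- The truncated reciprocal: the function of the sampled weight whose value is the estimator `b`
at threshold `φ`. -/
noncomputable def truncatedInv (φ t : ℝ) : ℝ := if φ ≤ t then t⁻¹ else 0

theorem truncatedInv_of_le {φ t : ℝ} (h : φ ≤ t) : truncatedInv φ t = t⁻¹ := if_pos h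

theorem truncatedInv_of_lt {φ t : ℝ} (h : t < φ) : truncatedInv φ t = 0 := if_neg h.not_ge

section ProportionalSample

variable {Ω U : Type*} {mΩ : MeasurableSpace Ω} {μ : Measure Ω} {w : U → ℝ} {W : ℝ} {a : Ω → U}

/-- `a` is a proportional sample for the weights `w` with total weight `W`.  The fibres are measured
by the outer measure, so that no measurability of `a` is presupposed. -/
def IsProportionalSample (μ : Measure Ω) (w : U → ℝ) (W : ℝ) (a : Ω → U) : Prop :=
  ∀ x, μ (a ⁻¹' {x}) = ENNReal.ofReal (w x / W)

namespace IsProportionalSample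

theorem nullMeasurableSet_fiber [Countable U] [IsProbabilityMeasure μ]
    (ha : IsProportionalSample μ w W a) (hw : ∀ x, 0 ≤ w x) (hW : HasSum w W) (x : U) :
    NullMeasurableSet (a ⁻¹' {x}) μ := by
  refine nullMeasurableSet_of_iUnion_eq_univ_of_tsum_le (s := fun y => a ⁻¹' {y})
    (Set.iUnion_eq_univ_iff.2 fun ω => ⟨a ω, rfl⟩) ?_ x
  have hdiv : HasSum (fun y => w y / W) (W / W) := hW.div_const W
  calc ∑' y, μ (a ⁻¹' {y}) = ∑' y, ENNReal.ofReal (w y / W) := tsum_congr ha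
    _ = ENNReal.ofReal (W / W) := by
        rw [← ENNReal.ofReal_tsum_of_nonneg (fun y => div_nonneg (hw y) (hW.nonneg hw))
          hdiv.summable, hdiv.tsum_eq]
    _ ≤ μ Set.univ := by
        rw [measure_univ]
        exact ENNReal.ofReal_le_one.2 (div_self_le_one W)

theorem integral_truncatedInv_pow_succ [IsFiniteMeasure μ] {φ : ℝ} {S : Finset U}
    (ha : IsProportionalSample μ w W a) (hW : 0 ≤ W) (hφ : 0 < φ)
    (hS : ∀ x, x ∈ S ↔ φ ≤ w x) (hfib : ∀ x ∈ S, NullMeasurableSet (a ⁻¹' {x}) μ) (k : ℕ) :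
    ∫ ω, truncatedInv φ (w (a ω)) ^ (k + 1) ∂μ = ∑ x ∈ S, (w x)⁻¹ ^ k / W := by
  have hsupp : ∀ x ∉ S, truncatedInv φ (w x) ^ (k + 1) = 0 := fun x hx => by
    rw [truncatedInv_of_lt (not_le.1 (mt (hS x).2 hx)), zero_pow k.succ_ne_zero]
  rw [integral_comp_eq_sum_measureReal_fiber_smul hfib hsupp]
  refine Finset.sum_congr rfl fun x hx => ?_
  have hφx : φ ≤ w x := (hS x).1 hx
  have hwx : 0 < w x := hφ.trans_le hφx
  rw [measureReal_def, ha x, ENNReal.toReal_ofReal (div_nonneg hwx.le hW), smul_eq_mul,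
    truncatedInv_of_le hφx, pow_succ']
  field_simp

end IsProportionalSample

theorem truncated_harmonic_estimator_moments_general [Countable U] [IsProbabilityMeasure μ]
    (hw : ∀ x, 0 ≤ w x) (hW : HasSum w W) (ha : IsProportionalSample μ w W a)
    {φ : ℝ} (hφ : 0 < φ) :
    ∫ ω, truncatedInv φ (w (a ω)) ∂μ = {x | φ ≤ w x}.ncard / W ∧
      variance (fun ω => truncatedInv φ (w (a ω))) μ ≤ {x | φ ≤ w x}.ncard / (φ * W) := by
  have hfin : {x | φ ≤ w x}.Finite := by
    simpa using hW.summable.tendsto_cofinite_zero.eventually_lt_const hφ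
  set S : Finset U := hfin.toFinset
  have hS (x : U) : x ∈ S ↔ φ ≤ w x := hfin.mem_toFinset
  have hW0 : 0 ≤ W := hW.nonneg hw
  have hfib (x) (_ : x ∈ S) := ha.nullMeasurableSet_fiber hw hW x
  have hmoment := ha.integral_truncatedInv_pow_succ hW0 hφ hS hfib
  rw [Set.ncard_eq_toFinset_card _ hfin]
  constructor
  · simpa [div_eq_mul_inv] using hmoment 0
  · have hint : Integrable (fun ω => truncatedInv φ (w (a ω))) μ :=
      integrable_comp_of_nullMeasurableSet_fiber hfib (f := fun x => truncatedInv φ (w x))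
        fun x hx => truncatedInv_of_lt (not_le.1 (mt (hS x).2 hx))
    calc variance (fun ω => truncatedInv φ (w (a ω))) μ
        ≤ ∫ ω, truncatedInv φ (w (a ω)) ^ 2 ∂μ :=
          variance_le_expectation_sq hint.aestronglyMeasurable
      _ = ∑ x ∈ S, (w x)⁻¹ / W := by simpa using hmoment 1
      _ ≤ ∑ _x ∈ S, φ⁻¹ / W := by
          gcongr with x hx
          exact (hS x).1 hx
      _ = S.card / (φ * W) := by
          rw [Finset.sum_const, nsmul_eq_mul, div_eq_mul_inv, div_eq_mul_inv, mul_inv]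

end ProportionalSample

/-- (Truncated harmonic estimator, one sample.) Fix a threshold `φ > 0`,
let `p = |{a : w a ≥ φ}|/n`, draw one proportional sample `a`, and set `b = 1/w(a)` if
`w(a) ≥ φ` and `b = 0` otherwise.  Then `E[b] = p·n/W` and `Var(b) ≤ p·n/(φ·W)`. -/
theorem truncated_harmonic_estimator_moments
    {Ω U : Type*} [MeasurableSpace Ω] (μ : Measure Ω) [IsProbabilityMeasure μ]
    [Fintype U] [DecidableEq U]
    (n : ℕ) (hn : Fintype.card U = n)
    (w : U → ℝ) (hw : ∀ x, 0 < w x)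
    (W : ℝ) (hW : W = ∑ x, w x)
    (a : Ω → U)
    (hlaw : ∀ x : U, μ {ω | a ω = x} = ENNReal.ofReal (w x / W))
    (φ : ℝ) (hφ : 0 < φ)
    (p : ℝ) (hp : p = ((Finset.univ.filter (fun x => φ ≤ w x)).card : ℝ) / n)
    (b : Ω → ℝ)
    (hb : ∀ ω, b ω = if φ ≤ w (a ω) then (w (a ω))⁻¹ else 0) :
    ∫ ω, b ω ∂μ = p * n / W ∧ variance b μ ≤ p * n / (φ * W) := by
  obtain rfl : b = fun ω => truncatedInv φ (w (a ω)) := funext hb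
  have hpn : p * n = {x | φ ≤ w x}.ncard := by
    have hcard : (Finset.univ.filter fun x => φ ≤ w x).card ≤ n := hn ▸ Finset.card_le_univ _
    rw [hp, div_mul_cancel_of_imp fun h0 => by norm_cast at h0 ⊢; lia,
      ← Set.ncard_coe_finset, Finset.coe_filter_univ]
  rw [hpn]
  exact truncated_harmonic_estimator_moments_general (fun x => (hw x).le)
    (hW ▸ hasSum_fintype w) hlaw hφ
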